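/- arXiv:2009.01425 — 3 statements merged into one kernel-verified Lean document; each statement's English description precedes it below -/
import Mathlib

section
/- If A₀ + A₁ ≥ 1, then the sequence of approximants μ_N converges weakly as N → ∞ to a Borel probability measure μ on ℝ concentrated on [0,1]; in particular the ghost measure of f exists. -/
open MeasureTheory Filter Topology

/-- The `N`-th approximant to the ghost measure of `f`: the normalised Dirac comb built from
the values of `f` on the fundamental region `[2^N, 2^(N+1))`. -/
noncomputable def ghostApprox (f : ℕ → ℕ) (N : ℕ) : Measure ℝ :=
  (∑ n ∈ Finset.range (2 ^ N), (f (2 ^ N + n) : ENNReal))⁻¹ •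
    ∑ n ∈ Finset.range (2 ^ N), (f (2 ^ N + n) : ENNReal) • Measure.dirac ((n : ℝ) / 2 ^ N)

/-- Weak (vague) convergence of a sequence of finite measures on `ℝ`. -/
def WeakLimit (μs : ℕ → Measure ℝ) (μ : Measure ℝ) : Prop :=
  ∀ g : BoundedContinuousFunction ℝ ℝ,
    Tendsto (fun N => ∫ x, g x ∂(μs N)) atTop (𝓝 (∫ x, g x ∂μ))

/-!
Suppose that `f (2 * n) + f (2 * n + 1) = a * f n + b`. Moving each odd node `(2n+1)/2^(N+1)` of
the approximant `μ_(N+1)` onto its even neighbour `n/2^N` displaces mass by only `2⁻⁽ᴺ⁺¹⁾`, and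
turns `μ_(N+1)` into a convex combination `θ_N μ_N + (1 - θ_N) λ_N`, where `λ_N` is the uniform
measure on the nodes, that is, the approximant of the constant sequence `1`. Hence, for `g`
Lipschitz, `μ_(N+1)(g)` lies within `O(2⁻ᴺ)` of the segment from `λ_N(g)` to `μ_N(g)`. As `λ_N(g)`
has summable increments, the distance from `μ_N(g)` to `λ_N(g)` is a Lyapunov function, up to
summable errors, that controls the increments of `μ_N(g)`; so `μ_N(g)` is Cauchy, and Prokhorov's
theorem on `[0,1]` provides the limit measure.
-/

section CauchySequences

variable {E : Type*}

lemma cauchySeq_of_dist_succ_le_sub_add [PseudoMetricSpace E] {m : ℕ → E} {φ e : ℕ → ℝ}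
    (hφ : ∀ N, 0 ≤ φ N) (he : Summable e)
    (hm : ∀ N, dist (m N) (m (N + 1)) ≤ φ N - φ (N + 1) + e N) : CauchySeq m := by
  obtain ⟨C, hC⟩ := he.hasSum.tendsto_sum_nat.bddAbove_range
  refine cauchySeq_of_summable_dist <|
    summable_of_sum_range_le (c := φ 0 + C) (fun _ => dist_nonneg) fun n => ?_
  calc ∑ N ∈ Finset.range n, dist (m N) (m (N + 1))
      ≤ ∑ N ∈ Finset.range n, (φ N - φ (N + 1) + e N) := Finset.sum_le_sum fun N _ => hm N
    _ = φ 0 - φ n + ∑ N ∈ Finset.range n, e N := by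
        rw [Finset.sum_add_distrib, Finset.sum_range_sub']
    _ ≤ φ 0 + C := by linarith [hφ n, hC (Set.mem_range_self n)]

lemma cauchySeq_of_dist_lineMap_le [SeminormedAddCommGroup E] [NormedSpace ℝ E] {m r : ℕ → E}
    {θ e : ℕ → ℝ} (hθ : ∀ N, θ N ∈ Set.Icc (0 : ℝ) 1) (he : Summable e)
    (hr : Summable fun N => dist (r N) (r (N + 1)))
    (hm : ∀ N, dist (m (N + 1)) (AffineMap.lineMap (r N) (m N) (θ N)) ≤ e N) : CauchySeq m := by
  refine cauchySeq_of_dist_succ_le_sub_add (φ := fun N => dist (r N) (m N))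
    (fun _ => dist_nonneg) ((he.mul_left 2).add hr) fun N => ?_
  set p := AffineMap.lineMap (r N) (m N) (θ N)
  have hpr : dist p (r N) = θ N * dist (r N) (m N) := by
    rw [dist_lineMap_left, Real.norm_of_nonneg (hθ N).1]
  have hpm : dist p (m N) = (1 - θ N) * dist (r N) (m N) := by
    rw [dist_lineMap_right, Real.norm_of_nonneg (sub_nonneg.2 (hθ N).2)]
  have hincr : dist (m N) (m (N + 1)) ≤ dist p (m N) + e N := by
    linarith [dist_triangle_left (m N) (m (N + 1)) p, dist_comm p (m (N + 1)), hm N]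
  have hgap : dist (r (N + 1)) (m (N + 1)) ≤ dist (r N) (r (N + 1)) + dist p (r N) + e N := by
    linarith [dist_triangle4 (r (N + 1)) (r N) p (m (N + 1)), dist_comm (r (N + 1)) (r N),
      dist_comm (r N) p, dist_comm p (m (N + 1)), hm N]
  linarith

end CauchySequences

section DyadicMeans

/-- The sum of `g` over the dyadic nodes `n / 2 ^ N` of `[0, 1)`, where the node `n / 2 ^ N` has
weight `f (2 ^ N + n)`. -/
noncomputable def dyadicSum (f : ℕ → ℝ) (g : ℝ → ℝ) (N : ℕ) : ℝ :=
  ∑ n ∈ Finset.range (2 ^ N), f (2 ^ N + n) * g (n / 2 ^ N)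

/-- The mean of `g` with respect to the `N`-th approximant `μ_N` of the sequence `f`. It is `0` if
the total weight `dyadicSum f 1 N` vanishes. -/
noncomputable def dyadicMean (f : ℕ → ℝ) (g : ℝ → ℝ) (N : ℕ) : ℝ :=
  dyadicSum f g N / dyadicSum f 1 N

/-- The sequence `n ↦ f (2 * n) + f (2 * n + 1)`, which adds up the values of `f` at the two
children of `n` in the binary tree. -/
def childSum (f : ℕ → ℝ) (n : ℕ) : ℝ := f (2 * n) + f (2 * n + 1)

lemma sum_range_two_mul {M : Type*} [AddCommMonoid M] (h : ℕ → M) (n : ℕ) :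
    ∑ k ∈ Finset.range (2 * n), h k = ∑ k ∈ Finset.range n, (h (2 * k) + h (2 * k + 1)) := by
  induction n with
  | zero => simp
  | succ n ih =>
    rw [mul_add_one, Finset.sum_range_succ, Finset.sum_range_succ, Finset.sum_range_succ, ih,
      add_assoc]

variable {f : ℕ → ℝ} {g : ℝ → ℝ} {a b : ℝ} {K : NNReal}

lemma dyadicSum_succ (f : ℕ → ℝ) (g : ℝ → ℝ) (N : ℕ) :
    dyadicSum f g (N + 1) = ∑ n ∈ Finset.range (2 ^ N), (f (2 * (2 ^ N + n)) * g (n / 2 ^ N) +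
      f (2 * (2 ^ N + n) + 1) * g ((2 * n + 1) / 2 ^ (N + 1))) := by
  rw [dyadicSum, pow_succ', sum_range_two_mul]
  refine Finset.sum_congr rfl fun n _ => ?_
  have heven : ((2 * n : ℕ) : ℝ) / 2 ^ (N + 1) = n / 2 ^ N := by
    rw [pow_succ', Nat.cast_mul, Nat.cast_ofNat, mul_div_mul_left _ _ two_ne_zero]
  rw [heven, ← add_assoc, ← mul_add]
  push_cast
  rfl

lemma dyadicSum_succ_sub_dyadicSum_childSum (f : ℕ → ℝ) (g : ℝ → ℝ) (N : ℕ) :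
    dyadicSum f g (N + 1) - dyadicSum (childSum f) g N = ∑ n ∈ Finset.range (2 ^ N),
      f (2 * (2 ^ N + n) + 1) * (g ((2 * n + 1) / 2 ^ (N + 1)) - g (n / 2 ^ N)) := by
  rw [dyadicSum_succ, dyadicSum, ← Finset.sum_sub_distrib]
  refine Finset.sum_congr rfl fun n _ => ?_
  rw [childSum]
  ring

lemma dyadicSum_one_succ (f : ℕ → ℝ) (N : ℕ) :
    dyadicSum f 1 (N + 1) = dyadicSum (childSum f) 1 N := by
  rw [← sub_eq_zero, dyadicSum_succ_sub_dyadicSum_childSum]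
  simp

lemma dyadicSum_childSum (hf : ∀ n, 1 ≤ n → childSum f n = a * f n + b) (g : ℝ → ℝ) (N : ℕ) :
    dyadicSum (childSum f) g N = a * dyadicSum f g N + b * dyadicSum 1 g N := by
  simp only [dyadicSum, Finset.mul_sum, ← Finset.sum_add_distrib]
  refine Finset.sum_congr rfl fun n _ => ?_
  rw [hf _ (Nat.le_add_right_of_le Nat.one_le_two_pow), Pi.one_apply]
  ring

lemma dyadicSum_one_one (N : ℕ) : dyadicSum 1 1 N = 2 ^ N := by
  simp [dyadicSum]

lemma dyadicSum_one_pos (hf1 : 0 < f 1) (ha : 0 ≤ a) (hb : 0 ≤ b) (hab : 0 < a + b)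
    (hf : ∀ n, 1 ≤ n → childSum f n = a * f n + b) (N : ℕ) : 0 < dyadicSum f 1 N := by
  induction N with
  | zero => simpa [dyadicSum] using hf1
  | succ N ih =>
    rw [dyadicSum_one_succ, dyadicSum_childSum hf, dyadicSum_one_one]
    rcases ha.eq_or_lt with rfl | ha
    · have : 0 < b := by simpa using hab
      positivity
    · positivity

lemma abs_sub_le_of_lipschitzWith_dyadic (hg : LipschitzWith K g) (N n : ℕ) :
    |g ((2 * n + 1) / 2 ^ (N + 1)) - g (n / 2 ^ N)| ≤ K / 2 ^ (N + 1) := by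
  have hdiff : (2 * n + 1 : ℝ) / 2 ^ (N + 1) - n / 2 ^ N = 1 / 2 ^ (N + 1) := by
    field_simp
    ring
  calc |g ((2 * n + 1) / 2 ^ (N + 1)) - g (n / 2 ^ N)|
      ≤ K * |(2 * n + 1 : ℝ) / 2 ^ (N + 1) - n / 2 ^ N| := hg.dist_le_mul _ _
    _ = K / 2 ^ (N + 1) := by rw [hdiff, abs_of_nonneg (by positivity), mul_one_div]

lemma abs_dyadicSum_succ_sub_dyadicSum_childSum_le (hf0 : ∀ n, 0 ≤ f n) (hg : LipschitzWith K g)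
    (N : ℕ) : |dyadicSum f g (N + 1) - dyadicSum (childSum f) g N| ≤
      dyadicSum f 1 (N + 1) * (K / 2 ^ (N + 1)) := by
  rw [dyadicSum_succ_sub_dyadicSum_childSum, dyadicSum_one_succ, dyadicSum, Finset.sum_mul]
  refine (Finset.abs_sum_le_sum_abs _ _).trans (Finset.sum_le_sum fun n _ => ?_)
  rw [abs_mul, abs_of_nonneg (hf0 _), Pi.one_apply, mul_one]
  exact mul_le_mul (le_add_of_nonneg_left (hf0 _)) (abs_sub_le_of_lipschitzWith_dyadic hg N n)
    (abs_nonneg _) (add_nonneg (hf0 _) (hf0 _))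

lemma exists_dist_dyadicMean_succ_lineMap_le (hf0 : ∀ n, 0 ≤ f n)
    (hS : ∀ N, 0 < dyadicSum f 1 N) (ha : 0 ≤ a) (hb : 0 ≤ b)
    (hf : ∀ n, 1 ≤ n → childSum f n = a * f n + b) (hg : LipschitzWith K g) (N : ℕ) :
    ∃ θ ∈ Set.Icc (0 : ℝ) 1, dist (dyadicMean f g (N + 1))
      (AffineMap.lineMap (dyadicMean 1 g N) (dyadicMean f g N) θ) ≤ K / 2 ^ (N + 1) := by
  have hmass : dyadicSum f 1 (N + 1) = a * dyadicSum f 1 N + b * 2 ^ N := by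
    rw [dyadicSum_one_succ, dyadicSum_childSum hf, dyadicSum_one_one]
  have hpos := hS N
  have hpos' := hS (N + 1)
  refine ⟨a * dyadicSum f 1 N / dyadicSum f 1 (N + 1), ⟨by positivity, ?_⟩, ?_⟩
  · rw [div_le_one hpos', hmass]
    exact le_add_of_nonneg_right (by positivity)
  have hmix : AffineMap.lineMap (dyadicMean 1 g N) (dyadicMean f g N)
      (a * dyadicSum f 1 N / dyadicSum f 1 (N + 1)) =
      dyadicSum (childSum f) g N / dyadicSum f 1 (N + 1) := by
    have hb' : b = (dyadicSum f 1 (N + 1) - a * dyadicSum f 1 N) / 2 ^ N := by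
      rw [hmass]
      field_simp
      ring
    rw [AffineMap.lineMap_apply_ring', dyadicSum_childSum hf, hb', dyadicMean, dyadicMean,
      dyadicSum_one_one]
    field_simp
    ring
  rw [hmix, dyadicMean, Real.dist_eq, ← sub_div, abs_div, abs_of_pos hpos', div_le_iff₀' hpos']
  exact abs_dyadicSum_succ_sub_dyadicSum_childSum_le hf0 hg N

lemma dist_dyadicMean_one_succ_le (hg : LipschitzWith K g) (N : ℕ) :
    dist (dyadicMean 1 g N) (dyadicMean 1 g (N + 1)) ≤ K / 2 ^ (N + 1) := by
  obtain ⟨θ, -, hθ⟩ := exists_dist_dyadicMean_succ_lineMap_le (f := 1) (a := 2) (b := 0)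
    (fun _ => zero_le_one) (fun N => by rw [dyadicSum_one_one]; positivity) zero_le_two le_rfl
    (fun n _ => by norm_num [childSum]) hg N
  rwa [AffineMap.lineMap_same_apply, dist_comm] at hθ

lemma exists_tendsto_dyadicMean (hf0 : ∀ n, 0 ≤ f n) (hS : ∀ N, 0 < dyadicSum f 1 N)
    (ha : 0 ≤ a) (hb : 0 ≤ b) (hf : ∀ n, 1 ≤ n → childSum f n = a * f n + b)
    (hg : LipschitzWith K g) : ∃ l, Tendsto (dyadicMean f g) atTop (𝓝 l) := by
  have hsum : Summable fun N : ℕ => (K : ℝ) / 2 ^ (N + 1) := by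
    simpa only [pow_succ', div_mul_eq_div_div] using summable_geometric_two' (K : ℝ)
  choose θ hθ hdist using exists_dist_dyadicMean_succ_lineMap_le hf0 hS ha hb hf hg
  exact cauchySeq_tendsto_of_complete <| cauchySeq_of_dist_lineMap_le hθ hsum
    (Summable.of_nonneg_of_le (fun _ => dist_nonneg) (dist_dyadicMean_one_succ_le hg) hsum) hdist

end DyadicMeans

section WeakConvergence

variable {ι E : Type*} {l : Filter ι} [MeasurableSpace E] {ν : ι → ProbabilityMeasure E}

lemma exists_tendsto_of_isTightMeasureSet_of_lipschitz [MetricSpace E] [BorelSpace E] [NeBot l]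
    [l.IsCountablyGenerated]
    (hν : IsTightMeasureSet (Set.range fun i => (ν i : Measure E)))
    (hconv : ∀ (g : BoundedContinuousFunction E ℝ) (K : NNReal), LipschitzWith K g →
      ∃ c, Tendsto (fun i => ∫ x, g x ∂(ν i : Measure E)) l (𝓝 c)) :
    ∃ μ, Tendsto ν l (𝓝 μ) := by
  have hcompact : IsCompact (closure (Set.range ν)) :=
    isCompact_closure_of_isTightMeasureSet <| by
      convert hν using 1
      ext
      simp
  obtain ⟨μ, -, hμ⟩ := hcompact.ultrafilter_le_nhds ((Ultrafilter.of l).map ν) <|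
    tendsto_principal.2 <| .of_forall fun i => subset_closure (Set.mem_range_self i)
  refine ⟨μ, tendsto_iff_forall_lipschitz_integral_tendsto.2 ?_⟩
  rintro g ⟨C, hC⟩ ⟨K, hK⟩
  let G : BoundedContinuousFunction E ℝ := ⟨⟨g, hK.continuous⟩, C, hC⟩
  obtain ⟨c, hc⟩ := hconv G K hK
  have hGμ := ProbabilityMeasure.tendsto_iff_forall_integral_tendsto.1 hμ G
  rwa [tendsto_nhds_unique (hc.mono_left (Ultrafilter.of_le l)) hGμ] at hc

lemma measure_eq_zero_of_tendsto_of_isOpen [TopologicalSpace E] [OpensMeasurableSpace E]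
    [HasOuterApproxClosed E] [NeBot l] {μ : ProbabilityMeasure E} (hν : Tendsto ν l (𝓝 μ))
    {U : Set E} (hU : IsOpen U) (hνU : ∀ i, (ν i : Measure E) U = 0) : (μ : Measure E) U = 0 := by
  have h := ProbabilityMeasure.le_liminf_measure_open_of_tendsto hν hU
  simpa only [hνU, liminf_const, nonpos_iff_eq_zero] using h

end WeakConvergence

section GhostMeasure

lemma isProbabilityMeasure_ghostApprox {f : ℕ → ℕ} {N : ℕ}
    (h : 0 < dyadicSum (fun n => f n) 1 N) : IsProbabilityMeasure (ghostApprox f N) := by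
  have hne : (∑ n ∈ Finset.range (2 ^ N), (f (2 ^ N + n) : ENNReal)) ≠ 0 := by
    simp only [dyadicSum, Pi.one_apply, mul_one] at h
    exact_mod_cast h.ne'
  have htop : (∑ n ∈ Finset.range (2 ^ N), (f (2 ^ N + n) : ENNReal)) ≠ ⊤ := by
    simp [ENNReal.sum_eq_top]
  constructor
  simp only [ghostApprox, Measure.smul_apply, Measure.finsetSum_apply, smul_eq_mul,
    measure_univ, mul_one]
  exact ENNReal.inv_mul_cancel hne htop

lemma ghostApprox_compl_Icc (f : ℕ → ℕ) (N : ℕ) : ghostApprox f N (Set.Icc (0 : ℝ) 1)ᶜ = 0 := by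
  simp only [ghostApprox, Measure.smul_apply, Measure.finsetSum_apply, smul_eq_mul]
  refine mul_eq_zero_of_right _ (Finset.sum_eq_zero fun n hn => ?_)
  have hle : (n : ℝ) ≤ 2 ^ N := mod_cast (Finset.mem_range.1 hn).le
  have hmem : (n : ℝ) / 2 ^ N ∈ Set.Icc (0 : ℝ) 1 :=
    ⟨by positivity, div_le_one_of_le₀ hle (by positivity)⟩
  rw [Measure.dirac_apply' _ measurableSet_Icc.compl,
    Set.indicator_of_notMem (Set.notMem_compl_iff.2 hmem), mul_zero]

lemma integral_ghostApprox (f : ℕ → ℕ) (N : ℕ) (g : ℝ → ℝ) :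
    ∫ x, g x ∂(ghostApprox f N) = dyadicMean (fun n => f n) g N := by
  rw [ghostApprox, integral_smul_measure, integral_finsetSum_measure fun n _ =>
    (integrable_dirac (by simp)).smul_measure (by simp)]
  simp only [integral_smul_measure, integral_dirac, ENNReal.toReal_inv,
    ENNReal.toReal_sum fun _ _ => ENNReal.natCast_ne_top _, ENNReal.toReal_natCast, smul_eq_mul,
    dyadicMean, dyadicSum, Pi.one_apply, mul_one, div_eq_inv_mul]

lemma isTightMeasureSet_range_ghostApprox (f : ℕ → ℕ) :
    IsTightMeasureSet (Set.range (ghostApprox f)) :=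
  isTightMeasureSet_iff_exists_isCompact_measure_compl_le.2 fun _ _ =>
    ⟨Set.Icc 0 1, isCompact_Icc, Set.forall_mem_range.2 fun N => by simp [ghostApprox_compl_Icc]⟩

theorem stmt_1_general {a b : ℝ} (ha : 0 ≤ a) (hb : 0 ≤ b) (hab : 0 < a + b) {f : ℕ → ℕ}
    (hf1 : 1 ≤ f 1) (hf : ∀ n, 1 ≤ n → (f (2 * n) + f (2 * n + 1) : ℝ) = a * f n + b) :
    ∃ μ : Measure ℝ, IsProbabilityMeasure μ ∧ μ (Set.Icc (0 : ℝ) 1)ᶜ = 0 ∧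
      WeakLimit (ghostApprox f) μ := by
  have hS := dyadicSum_one_pos (f := fun n => f n) (mod_cast hf1) ha hb hab hf
  let ν (N : ℕ) : ProbabilityMeasure ℝ :=
    ⟨ghostApprox f N, isProbabilityMeasure_ghostApprox (hS N)⟩
  obtain ⟨μ, hμ⟩ : ∃ μ, Tendsto ν atTop (𝓝 μ) := by
    refine exists_tendsto_of_isTightMeasureSet_of_lipschitz (isTightMeasureSet_range_ghostApprox f)
      fun g K hg => ?_
    obtain ⟨c, hc⟩ := exists_tendsto_dyadicMean (fun _ => Nat.cast_nonneg _) hS ha hb hf hg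
    exact ⟨c, hc.congr fun N => (integral_ghostApprox f N g).symm⟩
  exact ⟨μ, inferInstance,
    measure_eq_zero_of_tendsto_of_isOpen hμ isClosed_Icc.isOpen_compl (ghostApprox_compl_Icc f),
    ProbabilityMeasure.tendsto_iff_forall_integral_tendsto.1 hμ⟩

end GhostMeasure

theorem stmt_1 (A₀ A₁ b₀ b₁ : ℕ) (hnz : ¬(A₀ = 0 ∧ A₁ = 0 ∧ b₀ = 0 ∧ b₁ = 0))
    (f : ℕ → ℕ) (hf1 : 1 ≤ f 1)
    (heven : ∀ n, 1 ≤ n → f (2 * n) = A₀ * f n + b₀)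
    (hodd : ∀ n, 1 ≤ n → f (2 * n + 1) = A₁ * f n + b₁)
    (hA : 1 ≤ A₀ + A₁) :
    ∃ μ : Measure ℝ, IsProbabilityMeasure μ ∧ μ (Set.Icc (0:ℝ) 1)ᶜ = 0 ∧
      WeakLimit (ghostApprox f) μ := by
  refine stmt_1_general (a := A₀ + A₁) (b := b₀ + b₁) (by positivity) (by positivity)
    (mod_cast (by omega)) hf1 fun n hn => ?_
  rw [heven n hn, hodd n hn]
  push_cast
  ring
end

section
/- If b₀ = b₁ = 0, A₀ ≠ A₁ and A₀, A₁ ≥ 1, then the approximants μ_N converge weakly to a probability measure μ that is singular continuous: μ is mutually singular with Lebesgue measure λ and μ({x}) = 0 for every x ∈ ℝ. -/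
open MeasureTheory Filter Topology

/-!
The limit is the law of a random number `0.d₀d₁d₂…` in base `2` whose digits are independent and
take the values `0` and `1` with probabilities proportional to `A₀` and `A₁`: iterating the
recurrence shows that the `N`-th approximant is exactly the law of the expansion truncated after
`N` digits. Reading off the digits recovers the independent sequence, while the digits of a
Lebesgue-random number are independent and uniform. Two laws of i.i.d. sequences with different
marginals are mutually singular, because the strong law of large numbers makes the frequency of
some letter differ, and the law of an i.i.d. sequence with nondegenerate marginal has no atoms;
both properties pull back along the digit map.
-/

open ProbabilityTheory Finset
open scoped ENNReal Function

lemma sum_range_mul {M : Type*} [AddCommMonoid M] (g : ℕ → M) (m k : ℕ) :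
    ∑ n ∈ range (k * m), g n = ∑ n ∈ range m, ∑ j : Fin k, g (k * n + j) := by
  induction m with
  | zero => simp
  | succ m ih =>
    rw [mul_add_one, sum_range_add, ih, sum_range_succ, sum_range fun j ↦ g (k * m + j)]

lemma mutuallySingular_of_map {X Y : Type*} [MeasurableSpace X] [MeasurableSpace Y]
    {μ μ' : Measure X} {g : X → Y} (hg : Measurable g) (h : μ.map g ⟂ₘ μ'.map g) :
    μ ⟂ₘ μ' := by
  obtain ⟨s, hs, hμ, hμ'⟩ := h
  rw [Measure.map_apply hg hs] at hμ
  rw [Measure.map_apply hg hs.compl] at hμ'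
  exact ⟨g ⁻¹' s, hg hs, hμ, hμ'⟩

lemma measure_le_of_singleton_le {E : Type*} [MeasurableSpace E] [Countable E]
    [MeasurableSingletonClass E] {μ μ' : Measure E} (h : ∀ e, μ {e} ≤ μ' {e}) : μ ≤ μ' := by
  refine Measure.le_iff.2 fun s hs ↦ ?_
  rw [← Measure.tsum_indicator_apply_singleton μ s hs,
    ← Measure.tsum_indicator_apply_singleton μ' s hs]
  exact ENNReal.tsum_le_tsum fun e ↦ Set.indicator_le_indicator (h e)

section NormalizedWeights

variable {E : Type*} [MeasurableSpace E] [MeasurableSingletonClass E] {A : E → ℝ≥0∞}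
  (h₀ : tsum A ≠ 0) (h_top : tsum A ≠ ∞)

lemma tsum_mul_toMeasure_normalize_singleton (e : E) :
    tsum A * (PMF.normalize A h₀ h_top).toMeasure {e} = A e := by
  rw [PMF.toMeasure_apply_singleton _ _ (measurableSet_singleton e), PMF.normalize_apply, mul_comm,
    ENNReal.inv_mul_cancel_right h₀ h_top]

lemma toMeasure_normalize_singleton_lt_one [Nontrivial E] (hA : ∀ e, A e ≠ 0) (e : E) :
    (PMF.normalize A h₀ h_top).toMeasure {e} < 1 := by
  obtain ⟨e', he'⟩ := exists_ne e
  rw [PMF.toMeasure_apply_singleton _ _ (measurableSet_singleton e)]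
  refine lt_of_le_of_ne (PMF.coe_le_one _ e) fun h ↦ ?_
  have h_support : e' ∈ ({e} : Set E) := by
    rw [← (PMF.apply_eq_one_iff _ e).1 h, PMF.support_normalize]
    exact hA e'
  exact he' h_support

lemma toMeasure_normalize_ne_uniform [Fintype E] [Nonempty E] {e e' : E} (h : A e ≠ A e') :
    (PMF.normalize A h₀ h_top).toMeasure ≠ (PMF.uniformOfFintype E).toMeasure := by
  intro h_eq
  refine h ?_
  rw [← tsum_mul_toMeasure_normalize_singleton h₀ h_top e,
    ← tsum_mul_toMeasure_normalize_singleton h₀ h_top e', h_eq]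
  simp only [PMF.toMeasure_apply_singleton _ _ (measurableSet_singleton _),
    PMF.uniformOfFintype_apply]

end NormalizedWeights

section IidSequences

variable {E : Type*} [MeasurableSpace E] {ν ν' : Measure E} [IsProbabilityMeasure ν]
  [IsProbabilityMeasure ν']

/-- The law of a sequence of independent letters with common law `ν`. -/
noncomputable abbrev iidLaw (ν : Measure E) : Measure (ℕ → E) :=
  Measure.infinitePi fun _ ↦ ν

lemma ae_tendsto_frequency_iidLaw {s : Set E} (hs : MeasurableSet s) :
    ∀ᵐ d ∂iidLaw ν,
      Tendsto (fun n : ℕ ↦ (∑ i ∈ range n, s.indicator (1 : E → ℝ) (d i)) / n) atTop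
        (𝓝 (ν.real s)) := by
  have h_meas : Measurable (s.indicator (1 : E → ℝ)) := measurable_one.indicator hs
  have h_law (i : ℕ) : HasLaw (fun d : ℕ → E ↦ d i) ν (iidLaw ν) :=
    (measurePreserving_eval_infinitePi (fun _ ↦ ν) i).hasLaw
  have h_indep : iIndepFun (fun i (d : ℕ → E) ↦ s.indicator (1 : E → ℝ) (d i)) (iidLaw ν) :=
    iIndepFun_infinitePi fun _ ↦ h_meas
  have h_integral : ∫ d, s.indicator (1 : E → ℝ) (d 0) ∂iidLaw ν = ν.real s := by
    rw [← integral_indicator_one hs]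
    exact (h_law 0).integral_comp h_meas.aestronglyMeasurable
  rw [← h_integral]
  refine strong_law_ae_real _ ?_ (fun i j hij ↦ h_indep.indepFun hij) fun i ↦ ?_
  · exact .of_bound (h_meas.comp (measurable_pi_apply 0)).aestronglyMeasurable 1
      (.of_forall fun d ↦ by simpa using norm_indicator_le_norm_self (1 : E → ℝ) (d 0))
  · exact ((h_law i).identDistrib (h_law 0)).comp h_meas

lemma mutuallySingular_iidLaw (h : ν ≠ ν') : iidLaw ν ⟂ₘ iidLaw ν' := by
  obtain ⟨s, hs, hne⟩ : ∃ s, MeasurableSet s ∧ ν s ≠ ν' s := by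
    contrapose! h
    exact Measure.ext h
  let typical : Set (ℕ → E) := {d | Tendsto
    (fun n : ℕ ↦ (∑ i ∈ range n, s.indicator (1 : E → ℝ) (d i)) / n) atTop (𝓝 (ν.real s))}
  have h_null : iidLaw ν' typical = 0 := by
    refine measure_mono_null ?_ (ae_tendsto_frequency_iidLaw (ν := ν') hs)
    intro d hd hd'
    exact hne <| (measureReal_eq_measureReal_iff).1 (tendsto_nhds_unique hd hd')
  exact .mk (s := typicalᶜ) (t := typical) (ae_tendsto_frequency_iidLaw hs) h_null (by simp)

lemma ae_frequently_ne_iidLaw [Finite E] [MeasurableSingletonClass E] (hν : ∀ e, ν {e} < 1)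
    (c : ℕ → E) : ∀ᵐ d ∂iidLaw ν, ∃ᶠ i in atTop, d i ≠ c i := by
  have : Nonempty E := ⟨c 0⟩
  obtain ⟨e₀, h_max⟩ := Finite.exists_max fun e ↦ ν {e}
  simp only [frequently_atTop, ae_all_iff]
  intro n
  refine le_antisymm (ge_of_tendsto'
    (ENNReal.tendsto_pow_atTop_nhds_zero_of_lt_one (hν e₀)) fun N ↦ ?_) zero_le
  calc iidLaw ν {d | ¬ ∃ i ≥ n, d i ≠ c i}
      ≤ iidLaw ν (Set.pi (Ico n (n + N)) fun i ↦ {c i}) := by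
        refine measure_mono fun d hd i hi ↦ ?_
        by_contra h
        exact hd ⟨i, (mem_Ico.1 hi).1, h⟩
    _ = ∏ i ∈ Ico n (n + N), ν {c i} :=
        Measure.infinitePi_pi _ fun i _ ↦ measurableSet_singleton _
    _ ≤ ν {e₀} ^ N := by
        simpa using prod_le_pow_card (Ico n (n + N)) _ _ fun i _ ↦ h_max (c i)

lemma nullSingletonClass_iidLaw [Finite E] [MeasurableSingletonClass E] (hν : ∀ e, ν {e} < 1) :
    NullSingletonClass (iidLaw ν) where
  measure_singleton c :=
    measure_mono_null (by rintro d rfl; simp) (ae_frequently_ne_iidLaw hν c)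

-- Upper bounds suffice because the cylinders of a given length form a partition and both measures
-- have total mass one.
lemma eq_iidLaw_of_cylinder_le [Countable E] [MeasurableSingletonClass E] {Q : Measure (ℕ → E)}
    [IsProbabilityMeasure Q]
    (hQ : ∀ N (c : ℕ → E), Q {d | ∀ i < N, d i = c i} ≤ ∏ i ∈ range N, ν {c i}) :
    Q = iidLaw ν := by
  refine IsProjectiveLimit.unique ?_ (Measure.isProjectiveLimit_infinitePi fun _ ↦ ν)
  refine (isProjectiveLimit_nat_iff (isProjectiveMeasureFamily_pi fun _ ↦ ν) Q).2 fun n ↦ ?_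
  have : IsProbabilityMeasure (Q.map (Preorder.frestrictLe (π := fun _ ↦ E) n)) :=
    Measure.isProbabilityMeasure_map (by fun_prop)
  refine Measure.eq_of_le_of_isProbabilityMeasure (measure_le_of_singleton_le fun c ↦ ?_)
  rw [Measure.map_apply (by fun_prop) (measurableSet_singleton c), Measure.pi_singleton]
  obtain ⟨c, rfl⟩ : ∃ c' : ℕ → E, Preorder.frestrictLe (π := fun _ ↦ E) n c' = c :=
    ⟨Function.extend Subtype.val c fun _ ↦ c ⟨n, mem_Iic.2 le_rfl⟩, by ext; simp⟩
  convert hQ (n + 1) c using 2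
  · ext d
    simp [funext_iff]
  · simp only [Preorder.frestrictLe_apply, prod_coe_sort (Iic n) fun i ↦ ν {c i},
      Nat.range_succ_eq_Iic]

end IidSequences

section Digits

open Real

variable {b : ℕ}

lemma measurable_ofDigitsTerm (i : ℕ) : Measurable fun d : ℕ → Fin b ↦ ofDigitsTerm d i := by
  unfold ofDigitsTerm
  fun_prop

lemma measurable_ofDigits : Measurable (ofDigits (b := b)) :=
  continuous_ofDigits.measurable

lemma measurable_digits [NeZero b] : Measurable fun x : ℝ ↦ digits x b :=
  measurable_pi_lambda _ fun _ ↦ measurable_from_nat.comp (Nat.measurable_floor.comp (by fun_prop))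

lemma ofDigits_lt_one {d : ℕ → Fin (b + 1)} {k : ℕ} (hk : d k ≠ Fin.last b) : ofDigits d < 1 := by
  have : NeZero b := ⟨fun hb ↦ by subst hb; exact hk (Subsingleton.elim (α := Fin 1) _ _)⟩
  rw [← ofDigits_const_last_eq_one b]
  refine Summable.tsum_lt_tsum (i := k) (fun i ↦ ?_) ?_ summable_ofDigitsTerm summable_ofDigitsTerm
  · simp only [ofDigitsTerm]
    gcongr
    exact Fin.le_last _
  · simp only [ofDigitsTerm]
    gcongr
    exact Fin.lt_last_iff_ne_last.2 hk

lemma pow_mul_sum_ofDigitsTerm_succ [NeZero b] (d : ℕ → Fin b) (n : ℕ) :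
    b ^ (n + 1) * ∑ i ∈ range (n + 1), ofDigitsTerm d i =
      b * (b ^ n * ∑ i ∈ range n, ofDigitsTerm d i) + (d n : ℝ) := by
  have hb : (b : ℝ) ≠ 0 := NeZero.ne _
  rw [sum_range_succ, ofDigitsTerm]
  field

lemma exists_natCast_eq_pow_mul_sum_ofDigitsTerm [NeZero b] (d : ℕ → Fin b) (n : ℕ) :
    ∃ m : ℕ, b ^ n * ∑ i ∈ range n, ofDigitsTerm d i = m := by
  induction n with
  | zero => exact ⟨0, by simp⟩
  | succ n ih =>
    obtain ⟨m, hm⟩ := ih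
    exact ⟨b * m + d n, by rw [pow_mul_sum_ofDigitsTerm_succ, hm]; push_cast; rfl⟩

lemma digits_ofDigits {d : ℕ → Fin (b + 1)} (hd : ∃ᶠ i in atTop, d i ≠ Fin.last b) :
    digits (ofDigits d) (b + 1) = d := by
  funext n
  obtain ⟨m, hm⟩ := exists_natCast_eq_pow_mul_sum_ofDigitsTerm d n
  let tail : ℝ := ofDigits fun i ↦ d (i + (n + 1))
  have tail_lt_one : tail < 1 := by
    obtain ⟨k, hk, hdk⟩ := frequently_atTop.1 hd (n + 1)
    exact ofDigits_lt_one (k := k - (n + 1)) (by rwa [Nat.sub_add_cancel hk])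
  have h_floor : ⌊ofDigits d * (b + 1 : ℕ) ^ (n + 1)⌋₊ = (b + 1) * m + d n := by
    have h_expand : ofDigits d * (b + 1 : ℕ) ^ (n + 1) = tail + ((b + 1) * m + d n : ℕ) := by
      rw [ofDigits_eq_sum_add_ofDigits d (n + 1), add_mul, mul_comm, pow_mul_sum_ofDigitsTerm_succ,
        hm]
      push_cast
      field
    rw [h_expand, Nat.floor_add_natCast (ofDigits_nonneg _), Nat.floor_eq_zero.2 tail_lt_one,
      zero_add]
  ext
  rw [digits, h_floor, Fin.val_ofNat, Nat.mul_add_mod, Nat.mod_eq_of_lt (d n).isLt]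

lemma volume_digits_cylinder_le [NeZero b] (c : ℕ → Fin b) (N : ℕ) :
    volume (Set.Ico 0 1 ∩ {x : ℝ | ∀ i < N, digits x b i = c i}) ≤ (b : ℝ≥0∞)⁻¹ ^ N := by
  let s : ℝ := ∑ i ∈ range N, ofDigitsTerm c i
  calc volume (Set.Ico 0 1 ∩ {x : ℝ | ∀ i < N, digits x b i = c i})
      ≤ volume (Set.Icc s (s + (b : ℝ)⁻¹ ^ N)) := by
        refine measure_mono fun x ⟨hx, hxc⟩ ↦ ?_
        have h_sum : ∑ i ∈ range N, ofDigitsTerm (digits x b) i = s :=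
          sum_congr rfl fun i hi ↦ by rw [ofDigitsTerm, ofDigitsTerm, hxc i (mem_range.1 hi)]
        rw [← h_sum]
        exact ⟨sum_ofDigitsTerm_digits_le hx N,
          sub_le_iff_le_add.1 (le_sum_ofDigitsTerm_digits hx N)⟩
    _ = (b : ℝ≥0∞)⁻¹ ^ N := by
        rw [Real.volume_Icc, add_sub_cancel_left, ENNReal.ofReal_pow (by positivity),
          ENNReal.ofReal_inv_of_pos (Nat.cast_pos.2 (NeZero.pos b)), ENNReal.ofReal_natCast]

lemma map_digits_volume [NeZero b] :
    (volume.restrict (Set.Ico (0 : ℝ) 1)).map (digits · b) =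
      iidLaw (PMF.uniformOfFintype (Fin b)).toMeasure := by
  have : IsProbabilityMeasure (volume.restrict (Set.Ico (0 : ℝ) 1)) := ⟨by simp⟩
  have := Measure.isProbabilityMeasure_map (μ := volume.restrict (Set.Ico (0 : ℝ) 1))
    (measurable_digits (b := b)).aemeasurable
  refine eq_iidLaw_of_cylinder_le fun N c ↦ ?_
  have h_cylinder : MeasurableSet {d : ℕ → Fin b | ∀ i < N, d i = c i} := by
    measurability
  rw [Measure.map_apply measurable_digits h_cylinder,
    Measure.restrict_apply (measurable_digits h_cylinder), Set.inter_comm]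
  simpa [PMF.toMeasure_apply_singleton] using volume_digits_cylinder_le c N

/-- The law of the random number `0.d₀d₁d₂…` in base `b` whose digits are independent with common
law `ν`. -/
noncomputable def digitMeasure (ν : Measure (Fin b)) : Measure ℝ :=
  (iidLaw ν).map ofDigits

instance {ν : Measure (Fin b)} [IsProbabilityMeasure ν] : IsProbabilityMeasure (digitMeasure ν) :=
  Measure.isProbabilityMeasure_map measurable_ofDigits.aemeasurable

lemma map_digits_digitMeasure {ν : Measure (Fin (b + 1))} [IsProbabilityMeasure ν]
    (hν : ∀ j, ν {j} < 1) : (digitMeasure ν).map (digits · (b + 1)) = iidLaw ν := by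
  rw [digitMeasure, Measure.map_map measurable_digits measurable_ofDigits]
  have h_inverse : (digits · (b + 1)) ∘ ofDigits =ᵐ[iidLaw ν] id := by
    filter_upwards [ae_frequently_ne_iidLaw hν fun _ ↦ Fin.last b] with d hd
    exact digits_ofDigits hd
  rw [Measure.map_congr h_inverse, Measure.map_id]

lemma nullSingletonClass_digitMeasure {ν : Measure (Fin (b + 1))} [IsProbabilityMeasure ν]
    (hν : ∀ j, ν {j} < 1) : NullSingletonClass (digitMeasure ν) where
  measure_singleton x := by
    have := nullSingletonClass_iidLaw hν
    refine measure_mono_null (t := (digits · (b + 1)) ⁻¹' {digits x (b + 1)}) (by simp) ?_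
    rw [← Measure.map_apply measurable_digits (measurableSet_singleton _),
      map_digits_digitMeasure hν, measure_singleton]

lemma mutuallySingular_digitMeasure_volume {ν : Measure (Fin (b + 1))} [IsProbabilityMeasure ν]
    (hν : ∀ j, ν {j} < 1) (h_uniform : ν ≠ (PMF.uniformOfFintype (Fin (b + 1))).toMeasure) :
    digitMeasure ν ⟂ₘ volume.restrict (Set.Ico (0 : ℝ) 1) := by
  refine mutuallySingular_of_map (measurable_digits (b := b + 1)) ?_
  rw [map_digits_digitMeasure hν, map_digits_volume]
  exact mutuallySingular_iidLaw h_uniform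

/-- The law of the truncation `0.d₀d₁…d_{N-1}` in base `b` when the digits are independent with
common law `ν`. -/
noncomputable def truncatedDigitMeasure (ν : Measure (Fin b)) (N : ℕ) : Measure ℝ :=
  (iidLaw ν).map fun d ↦ ∑ i ∈ range N, ofDigitsTerm d i

lemma measurable_sum_ofDigitsTerm (N : ℕ) :
    Measurable fun d : ℕ → Fin b ↦ ∑ i ∈ range N, ofDigitsTerm d i :=
  Finset.measurable_fun_sum _ fun i _ ↦ measurable_ofDigitsTerm i

instance {ν : Measure (Fin b)} [IsProbabilityMeasure ν] (N : ℕ) :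
    IsProbabilityMeasure (truncatedDigitMeasure ν N) :=
  Measure.isProbabilityMeasure_map (measurable_sum_ofDigitsTerm N).aemeasurable

lemma weakLimit_truncatedDigitMeasure {ν : Measure (Fin b)} [IsProbabilityMeasure ν] :
    WeakLimit (truncatedDigitMeasure ν) (digitMeasure ν) := by
  intro g
  simp only [truncatedDigitMeasure, digitMeasure,
    integral_map (measurable_sum_ofDigitsTerm _).aemeasurable g.continuous.aestronglyMeasurable,
    integral_map measurable_ofDigits.aemeasurable g.continuous.aestronglyMeasurable]
  refine tendsto_integral_of_dominated_convergence (fun _ ↦ ‖g‖) (fun N ↦ ?_) (integrable_const _)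
    (fun N ↦ .of_forall fun d ↦ g.norm_coe_le_norm _) (.of_forall fun d ↦ ?_)
  · exact (g.continuous.measurable.comp (measurable_sum_ofDigitsTerm N)).aestronglyMeasurable
  · exact (g.continuous.tendsto _).comp summable_ofDigitsTerm.hasSum.tendsto_sum_nat

lemma truncatedDigitMeasure_zero {ν : Measure (Fin b)} [IsProbabilityMeasure ν] :
    truncatedDigitMeasure ν 0 = Measure.dirac 0 := by
  simp [truncatedDigitMeasure]

lemma truncatedDigitMeasure_succ {ν : Measure (Fin b)} [IsProbabilityMeasure ν] (N : ℕ) :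
    truncatedDigitMeasure ν (N + 1) =
      truncatedDigitMeasure ν N ∗ ν.map fun j : Fin b ↦ (j : ℝ) * ((b : ℝ) ^ (N + 1))⁻¹ := by
  have h_indep : iIndepFun (fun i (d : ℕ → Fin b) ↦ ofDigitsTerm d i) (iidLaw ν) :=
    iIndepFun_infinitePi (X := fun i (j : Fin b) ↦ (j : ℝ) * ((b : ℝ) ^ (i + 1))⁻¹) fun _ ↦
      measurable_of_countable _
  have h_digit : (iidLaw ν).map (fun d ↦ ofDigitsTerm d N) =
      ν.map fun j : Fin b ↦ (j : ℝ) * ((b : ℝ) ^ (N + 1))⁻¹ := by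
    conv_rhs => rw [← (measurePreserving_eval_infinitePi (fun _ ↦ ν) N).map_eq,
      Measure.map_map (by fun_prop) (by fun_prop)]
    rfl
  have h_split : IndepFun (fun d : ℕ → Fin b ↦ ∑ i ∈ range N, ofDigitsTerm d i)
      (fun d ↦ ofDigitsTerm d N) (iidLaw ν) := by
    simpa only [Finset.sum_fn] using
      h_indep.indepFun_finsetSum_of_notMem measurable_ofDigitsTerm notMem_range_self
  rw [truncatedDigitMeasure, truncatedDigitMeasure, ← h_digit,
    ← h_split.map_add_eq_map_conv_map (measurable_sum_ofDigitsTerm N) (measurable_ofDigitsTerm N)]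
  simp only [sum_range_succ, Pi.add_def]

/-- The Dirac comb with weights `f (b ^ N + n)` at the points `n / b ^ N` of `[0, 1)`: the
unnormalised, base `b` analogue of `ghostApprox`, with weights in `ℝ≥0∞`. -/
noncomputable def digitComb (b : ℕ) (f : ℕ → ℝ≥0∞) (N : ℕ) : Measure ℝ :=
  ∑ n ∈ range (b ^ N), f (b ^ N + n) • Measure.dirac ((n : ℝ) / b ^ N)

lemma digitComb_succ [NeZero b] {ν : Measure (Fin b)} {f : ℕ → ℝ≥0∞} {S : ℝ≥0∞}
    (hf : ∀ n ≥ 1, ∀ j : Fin b, f (b * n + j) = S * ν {j} * f n) (N : ℕ) :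
    digitComb b f (N + 1) =
      S • (digitComb b f N ∗ ν.map fun j : Fin b ↦ (j : ℝ) * ((b : ℝ) ^ (N + 1))⁻¹) := by
  refine Measure.ext_of_lintegral _ fun g hg ↦ ?_
  have hb : (b : ℝ) ≠ 0 := NeZero.ne _
  have h_shift (n : ℕ) (j : Fin b) :
      ((b * n + j : ℕ) : ℝ) / b ^ (N + 1) = n / b ^ N + j * ((b : ℝ) ^ (N + 1))⁻¹ := by
    push_cast
    field
  have h_value (n : ℕ) (j : Fin b) :
      f (b ^ (N + 1) + (b * n + j)) = S * ν {j} * f (b ^ N + n) := by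
    rw [← hf _ (Nat.le_add_right_of_le (Nat.one_le_pow _ _ (NeZero.pos b)))]
    ring_nf
  have h_map (x : ℝ) : ∫⁻ y, g (x + y) ∂ν.map (fun j : Fin b ↦ (j : ℝ) * ((b : ℝ) ^ (N + 1))⁻¹) =
      ∑ j : Fin b, g (x + j * ((b : ℝ) ^ (N + 1))⁻¹) * ν {j} := by
    rw [lintegral_map (by fun_prop) (measurable_of_countable _), lintegral_fintype]
  rw [lintegral_smul_measure, Measure.lintegral_conv hg]
  simp only [digitComb, lintegral_finsetSum_measure, lintegral_smul_measure,
    lintegral_dirac, h_map, smul_eq_mul, mul_sum]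
  rw [pow_succ', sum_range_mul]
  refine sum_congr rfl fun n _ ↦ sum_congr rfl fun j _ ↦ ?_
  rw [← pow_succ', h_value, h_shift]
  ring

lemma digitComb_eq_smul_truncatedDigitMeasure [NeZero b] {ν : Measure (Fin b)}
    [IsProbabilityMeasure ν] {f : ℕ → ℝ≥0∞} {S : ℝ≥0∞}
    (hf : ∀ n ≥ 1, ∀ j : Fin b, f (b * n + j) = S * ν {j} * f n) (N : ℕ) :
    digitComb b f N = (f 1 * S ^ N) • truncatedDigitMeasure ν N := by
  induction N with
  | zero => simp [digitComb, truncatedDigitMeasure_zero]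
  | succ N ih =>
    rw [digitComb_succ hf, ih, truncatedDigitMeasure_succ, Measure.conv_smul_left, smul_smul,
      pow_succ']
    congr 1
    ring

lemma ghostApprox_eq_smul_digitComb (f : ℕ → ℕ) (N : ℕ) :
    ghostApprox f N = (digitComb 2 (fun n ↦ f n) N Set.univ)⁻¹ • digitComb 2 (fun n ↦ f n) N := by
  simp [ghostApprox, digitComb]

lemma ghostApprox_eq_truncatedDigitMeasure {f : ℕ → ℕ} (hf1 : f 1 ≠ 0) {ν : Measure (Fin 2)}
    [IsProbabilityMeasure ν] {S : ℝ≥0∞} (hS : S ≠ 0) (hS' : S ≠ ∞)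
    (hf : ∀ n ≥ 1, ∀ j : Fin 2, f (2 * n + j) = S * ν {j} * f n) (N : ℕ) :
    ghostApprox f N = truncatedDigitMeasure ν N := by
  have h_mass : (f 1 : ℝ≥0∞) * S ^ N ≠ 0 := mul_ne_zero (mod_cast hf1) (pow_ne_zero N hS)
  have h_mass' : (f 1 : ℝ≥0∞) * S ^ N ≠ ∞ := by finiteness
  rw [ghostApprox_eq_smul_digitComb, digitComb_eq_smul_truncatedDigitMeasure hf, Measure.smul_apply,
    measure_univ, smul_smul, smul_eq_mul, mul_one, ENNReal.inv_mul_cancel h_mass h_mass', one_smul]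

end Digits

theorem stmt_3 (A₀ A₁ b₀ b₁ : ℕ) (hnz : ¬(A₀ = 0 ∧ A₁ = 0 ∧ b₀ = 0 ∧ b₁ = 0))
    (f : ℕ → ℕ) (hf1 : 1 ≤ f 1)
    (heven : ∀ n, 1 ≤ n → f (2 * n) = A₀ * f n + b₀)
    (hodd : ∀ n, 1 ≤ n → f (2 * n + 1) = A₁ * f n + b₁)
    (hb₀ : b₀ = 0) (hb₁ : b₁ = 0) (hAne : A₀ ≠ A₁) (hA0 : 1 ≤ A₀) (hA1 : 1 ≤ A₁) :
    ∃ μ : Measure ℝ, IsProbabilityMeasure μ ∧ WeakLimit (ghostApprox f) μ ∧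
      μ.MutuallySingular (volume.restrict (Set.Ico (0:ℝ) 1)) ∧
      ∀ x : ℝ, μ {x} = 0 := by
  subst hb₀ hb₁
  let A : Fin 2 → ℝ≥0∞ := ![A₀, A₁]
  have hA : ∀ j, A j ≠ 0 := by simpa [A, Fin.forall_fin_two] using ⟨by lia, by lia⟩
  have h₀ : tsum A ≠ 0 := by simpa [A] using fun h ↦ absurd h (by lia)
  have h_top : tsum A ≠ ∞ := by simp [A]
  set ν := (PMF.normalize A h₀ h_top).toMeasure
  have h_rec : ∀ n ≥ 1, ∀ j : Fin 2, (f (2 * n + j) : ℝ≥0∞) = tsum A * ν {j} * f n := by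
    intro n hn j
    rw [tsum_mul_toMeasure_normalize_singleton]
    fin_cases j <;> simp [A, heven n hn, hodd n hn]
  have h_approx : ghostApprox f = truncatedDigitMeasure ν :=
    funext (ghostApprox_eq_truncatedDigitMeasure (by lia) h₀ h_top h_rec)
  have hν : ∀ j, ν {j} < 1 := toMeasure_normalize_singleton_lt_one h₀ h_top hA
  have h_uniform : ν ≠ (PMF.uniformOfFintype (Fin 2)).toMeasure :=
    toMeasure_normalize_ne_uniform h₀ h_top (e := 0) (e' := 1) (by simpa [A] using hAne)
  have := nullSingletonClass_digitMeasure hν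
  exact ⟨digitMeasure ν, inferInstance, h_approx ▸ weakLimit_truncatedDigitMeasure,
    mutuallySingular_digitMeasure_volume hν h_uniform, measure_singleton⟩
end

section
/- Assume 1 ≤ A₀ < A₁, A₀ + A₁ ≥ 3, and let μ be the ghost measure of f. Set Λ = log(2A₁/(A₀+A₁)) / log(A₁/A₀). If x ∈ [0,1) is such that the lower density of zeroes in its binary expansion, liminf_{i→∞} (#{1 ≤ j ≤ i : d_j(x) = 0})/i, is strictly greater than Λ, then lim_{i→∞} 2^i · μ(E_i(x)) = 0, where E_i(x) = [⌊2^i x⌋/2^i, (⌊2^i x⌋+1)/2^i) is the level-i dyadic interval containing x. -/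
open MeasureTheory Filter Topology

/-!
The weight `w n = (A₀ + A₁ - 2) f n + (b₀ + b₁)` satisfies `w (2n) + w (2n+1) = (A₀ + A₁) w n`, so
the sum of `f` over the descendants of a node `m` at depth `k` is `(A₀ + A₁)^k w m - 2^k (b₀ + b₁)`
divided by `A₀ + A₁ - 2`. Hence the ghost measure has no atoms, and it gives the dyadic interval
with left endpoint `m / 2^i` the mass `w (2^i + m) / ((A₀ + A₁)^i w 1)`. Along the binary expansion
of `x`, each digit multiplies `w` by `A₀` or `A₁`, up to a bounded additive error, so
`2^i μ(E_i(x))` is at most `p^z q^(i-z)` times an affine function of `i`, where `z` counts the zeros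
among the first `i` digits, `p = 2A₀ / (A₀ + A₁)` and `q = 2A₁ / (A₀ + A₁)`. This tends to `0`
geometrically once the density of zeros stays above a constant exceeding `log q / log (q / p)`.
-/

/-- The dyadic interval `[m / 2^i, (m + 1) / 2^i)` of level `i`. The position `m` is an integer, so
that these intervals partition the whole line. -/
def dyadicIco (i : ℕ) (m : ℤ) : Set ℝ :=
  Set.Ico ((m : ℝ) / 2 ^ i) (((m : ℝ) + 1) / 2 ^ i)

theorem mem_dyadicIco_iff_floor_eq {i : ℕ} {m : ℤ} {y : ℝ} :
    y ∈ dyadicIco i m ↔ ⌊(2 : ℝ) ^ i * y⌋ = m := by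
  have hpow : (0 : ℝ) < 2 ^ i := by positivity
  rw [dyadicIco, Set.mem_Ico, Int.floor_eq_iff, div_le_iff₀' hpow, lt_div_iff₀' hpow]

theorem disjoint_dyadicIco_Ico_zero_one {i : ℕ} {m : ℤ} (hm : m < 0 ∨ 2 ^ i ≤ m) :
    Disjoint (dyadicIco i m) (Set.Ico 0 1) := by
  refine Set.disjoint_left.2 fun y hy ⟨hy0, hy1⟩ => ?_
  rw [mem_dyadicIco_iff_floor_eq] at hy
  have hpow : (0 : ℝ) < 2 ^ i := by positivity
  have hnonneg : 0 ≤ ⌊(2 : ℝ) ^ i * y⌋ := Int.floor_nonneg.2 (by positivity)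
  have hlt : ⌊(2 : ℝ) ^ i * y⌋ < 2 ^ i := by
    rw [Int.floor_lt]
    push_cast
    nlinarith
  omega

section WeakLimit

variable {μs : ℕ → Measure ℝ} {μ : Measure ℝ} [∀ N, IsProbabilityMeasure (μs N)]
  [IsProbabilityMeasure μ]

theorem WeakLimit.tendsto_probabilityMeasure (h : WeakLimit μs μ) :
    Tendsto (β := ProbabilityMeasure ℝ) (fun N => ⟨μs N, inferInstance⟩) atTop
      (𝓝 ⟨μ, inferInstance⟩) :=
  ProbabilityMeasure.tendsto_iff_forall_integral_tendsto.2 h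

theorem WeakLimit.measureReal_le_of_isOpen (h : WeakLimit μs μ) {U : Set ℝ} (hU : IsOpen U)
    {a : ℕ → ℝ} {c : ℝ} (hUa : ∀ N, (μs N).real U ≤ a N) (ha : Tendsto a atTop (𝓝 c)) :
    μ.real U ≤ c := by
  have hc : 0 ≤ c := ge_of_tendsto' ha fun N => measureReal_nonneg.trans (hUa N)
  refine ENNReal.toReal_le_of_le_ofReal hc ?_
  calc
    μ U ≤ liminf (fun N => μs N U) atTop :=
      ProbabilityMeasure.le_liminf_measure_open_of_tendsto h.tendsto_probabilityMeasure hU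
    _ ≤ liminf (fun N => ENNReal.ofReal (a N)) atTop :=
      liminf_le_liminf <| .of_forall fun N =>
        (ENNReal.le_ofReal_iff_toReal_le (measure_ne_top _ _)
          (measureReal_nonneg.trans (hUa N))).2 (hUa N)
    _ = ENNReal.ofReal c := (ENNReal.tendsto_ofReal ha).liminf_eq

theorem WeakLimit.nullSingletonClass_of_dyadicIco_le (h : WeakLimit μs μ) {ε : ℕ → ℝ}
    (hε : Tendsto ε atTop (𝓝 0))
    (hcell : ∀ i m, ∃ c ≤ ε i, Tendsto (fun N => (μs N).real (dyadicIco i m)) atTop (𝓝 c)) :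
    NullSingletonClass μ := by
  refine ⟨fun y => ?_⟩
  have hle : ∀ i, μ.real {y} ≤ ε i + ε i := by
    intro i
    set m := ⌊(2 : ℝ) ^ i * y⌋ with hm
    set U : Set ℝ := Set.Ioo (((m : ℝ) - 1) / 2 ^ i) (((m : ℝ) + 1) / 2 ^ i)
    have hy : y ∈ dyadicIco i m := mem_dyadicIco_iff_floor_eq.2 hm.symm
    have hyU : y ∈ U := ⟨lt_of_lt_of_le (by gcongr; linarith) hy.1, hy.2⟩
    have hU : U ⊆ dyadicIco i (m - 1) ∪ dyadicIco i m := by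
      intro t ht
      rcases lt_or_ge t ((m : ℝ) / 2 ^ i) with htm | htm
      · exact Or.inl ⟨by simpa using ht.1.le, by simpa using htm⟩
      · exact Or.inr ⟨htm, ht.2⟩
    obtain ⟨c, hc, hlim⟩ := hcell i (m - 1)
    obtain ⟨c', hc', hlim'⟩ := hcell i m
    calc
      μ.real {y} ≤ μ.real U := measureReal_mono (Set.singleton_subset_iff.2 hyU)
      _ ≤ c + c' := h.measureReal_le_of_isOpen isOpen_Ioo
        (fun _ => (measureReal_mono hU).trans (measureReal_union_le _ _)) (hlim.add hlim')
      _ ≤ ε i + ε i := add_le_add hc hc'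
  have hzero : μ.real {y} = 0 :=
    le_antisymm (ge_of_tendsto' (by simpa using hε.add hε) hle) measureReal_nonneg
  exact (measureReal_eq_zero_iff).1 hzero

theorem WeakLimit.tendsto_measureReal_dyadicIco [NullSingletonClass μ] (h : WeakLimit μs μ)
    (i : ℕ) (m : ℤ) :
    Tendsto (fun N => (μs N).real (dyadicIco i m)) atTop (𝓝 (μ.real (dyadicIco i m))) := by
  have hnull : μ (frontier (dyadicIco i m)) = 0 := by
    rw [dyadicIco, frontier_Ico (by gcongr; linarith)]
    exact (Set.toFinite _).measure_zero μ
  exact (ENNReal.tendsto_toReal (measure_ne_top μ _)).comp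
    (ProbabilityMeasure.tendsto_measure_of_null_frontier_of_tendsto' h.tendsto_probabilityMeasure
      hnull)

end WeakLimit

/-- The sum of `f` over the descendants of `m` at depth `k` in the binary tree in which `n` has
children `2 * n` and `2 * n + 1`. -/
def blockSum (f : ℕ → ℕ) (m k : ℕ) : ℕ :=
  ∑ r ∈ Finset.range (2 ^ k), f (2 ^ k * m + r)

@[simp]
theorem blockSum_zero (f : ℕ → ℕ) (m : ℕ) : blockSum f m 0 = f m := by
  simp [blockSum]

theorem blockSum_succ (f : ℕ → ℕ) (m k : ℕ) :
    blockSum f m (k + 1) = blockSum f (2 * m) k + blockSum f (2 * m + 1) k := by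
  simp only [blockSum]
  rw [show 2 ^ (k + 1) = 2 ^ k + 2 ^ k by ring, Finset.sum_range_add]
  congr 1 <;> exact Finset.sum_congr rfl fun r _ => congrArg f (by ring)

section GhostApprox

variable (f : ℕ → ℕ)

theorem measureReal_ghostApprox (N : ℕ) (E : Set ℝ)
    [DecidablePred fun n : ℕ => (n : ℝ) / 2 ^ N ∈ E] :
    (ghostApprox f N).real E =
      (∑ n ∈ Finset.range (2 ^ N) with ((n : ℕ) : ℝ) / 2 ^ N ∈ E, f (2 ^ N + n) : ℕ) /
        (blockSum f 1 N : ℝ) := by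
  have htotal : ∑ n ∈ Finset.range (2 ^ N), (f (2 ^ N + n) : ENNReal) = blockSum f 1 N := by
    simp [blockSum]
  have hdirac : ∀ n : ℕ, ((f (2 ^ N + n) : ENNReal) • Measure.dirac ((n : ℝ) / 2 ^ N)) E =
      if (n : ℝ) / 2 ^ N ∈ E then (f (2 ^ N + n) : ENNReal) else 0 := by
    intro n
    by_cases hn : (n : ℝ) / 2 ^ N ∈ E <;> simp [hn]
  rw [ghostApprox, htotal, measureReal_ennreal_smul_apply, measureReal_def,
    Measure.finsetSum_apply, Finset.sum_congr rfl fun n _ => hdirac n, ← Finset.sum_filter,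
    ← Nat.cast_sum, ENNReal.toReal_inv, ENNReal.toReal_natCast, ENNReal.toReal_natCast,
    div_eq_inv_mul]

theorem measureReal_ghostApprox_eq_zero_of_disjoint (N : ℕ) {E : Set ℝ}
    (hE : Disjoint E (Set.Ico 0 1)) :
    (ghostApprox f N).real E = 0 := by
  classical
  rw [measureReal_ghostApprox, Finset.filter_false_of_mem]
  · simp
  · intro n hn hnE
    refine Set.disjoint_left.1 hE hnE ⟨by positivity, ?_⟩
    rw [div_lt_one (by positivity)]
    exact_mod_cast Finset.mem_range.1 hn

theorem measureReal_ghostApprox_dyadicIco {i m : ℕ} (hm : m < 2 ^ i) (k : ℕ) :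
    (ghostApprox f (k + i)).real (dyadicIco i m) =
      (blockSum f (2 ^ i + m) k : ℝ) / blockSum f 1 (k + i) := by
  classical
  have hmem : ∀ n : ℕ, (n : ℝ) / 2 ^ (k + i) ∈ dyadicIco i m ↔ n / 2 ^ k = m := by
    intro n
    have hscale : (2 : ℝ) ^ i * (n / 2 ^ (k + i)) = (n : ℝ) / ((2 ^ k : ℕ) : ℝ) := by
      push_cast
      rw [pow_add]
      field_simp
    rw [mem_dyadicIco_iff_floor_eq, hscale, Int.floor_div_natCast, Int.floor_natCast]
    exact_mod_cast Iff.rfl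
  have hfilter : {n ∈ Finset.range (2 ^ (k + i)) | ((n : ℕ) : ℝ) / 2 ^ (k + i) ∈ dyadicIco i m} =
      Finset.Ico (2 ^ k * m) (2 ^ k * m + 2 ^ k) := by
    have hend : 2 ^ k * m + 2 ^ k ≤ 2 ^ (k + i) := by
      rw [pow_add, ← Nat.mul_succ]
      exact Nat.mul_le_mul_left _ hm
    ext n
    rw [Finset.mem_filter, hmem, Nat.div_eq_iff (by positivity), Finset.mem_range, Finset.mem_Ico,
      mul_comm m]
    have : 0 < 2 ^ k := by positivity
    omega
  rw [measureReal_ghostApprox, hfilter, Finset.sum_Ico_eq_sum_range, Nat.add_sub_cancel_left,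
    blockSum]
  congr 2
  exact Finset.sum_congr rfl fun r _ => congrArg f (by ring)

theorem isProbabilityMeasure_ghostApprox_of_pos {N : ℕ} (hN : 0 < blockSum f 1 N) :
    IsProbabilityMeasure (ghostApprox f N) := by
  classical
  refine ⟨(ENNReal.toReal_eq_one_iff _).1 ?_⟩
  rw [← measureReal_def, measureReal_ghostApprox]
  simp only [Set.mem_univ, Finset.filter_true]
  rw [div_eq_one_iff_eq (by positivity)]
  simp [blockSum]

end GhostApprox

/-- The number of zeros among the first `i` binary digits of `x` after the binary point. -/
noncomputable def zeroCount (x : ℝ) (i : ℕ) : ℕ :=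
  ((Finset.Icc 1 i).filter fun j => ⌊(2 : ℝ) ^ j * x⌋ % 2 = 0).card

/-- The product over the first `i` binary digits of `x` in which each digit `0` contributes `a₀`
and each digit `1` contributes `a₁`. -/
noncomputable def digitProd (a₀ a₁ x : ℝ) (i : ℕ) : ℝ :=
  ∏ j ∈ Finset.Icc 1 i, if ⌊(2 : ℝ) ^ j * x⌋ % 2 = 0 then a₀ else a₁

section DigitProd

variable {a₀ a₁ : ℝ}

theorem digitProd_succ (a₀ a₁ x : ℝ) (i : ℕ) :
    digitProd a₀ a₁ x (i + 1) =
      digitProd a₀ a₁ x i * if ⌊(2 : ℝ) ^ (i + 1) * x⌋ % 2 = 0 then a₀ else a₁ :=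
  Finset.prod_Icc_succ_top (by omega) _

theorem digitProd_eq_pow_mul_pow (a₀ a₁ x : ℝ) (i : ℕ) :
    digitProd a₀ a₁ x i = a₀ ^ zeroCount x i * a₁ ^ (i - zeroCount x i) := by
  have hsplit := Finset.card_filter_add_card_filter_not (s := Finset.Icc 1 i)
    (fun j => ⌊(2 : ℝ) ^ j * x⌋ % 2 = 0)
  rw [Nat.card_Icc, Nat.add_sub_cancel] at hsplit
  rw [digitProd, Finset.prod_ite, Finset.prod_const, Finset.prod_const, zeroCount]
  congr 2
  omega

theorem zeroCount_le (x : ℝ) (i : ℕ) : zeroCount x i ≤ i :=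
  (Finset.card_filter_le _ _).trans_eq (by simp)

theorem pow_mul_digitProd (c a₀ a₁ x : ℝ) (i : ℕ) :
    c ^ i * digitProd a₀ a₁ x i = digitProd (c * a₀) (c * a₁) x i := by
  simp only [digitProd, ← mul_ite, Finset.prod_mul_distrib, Finset.prod_const, Nat.card_Icc,
    Nat.add_sub_cancel]

theorem one_le_digitProd (h₀ : 1 ≤ a₀) (h₁ : 1 ≤ a₁) (x : ℝ) (i : ℕ) :
    1 ≤ digitProd a₀ a₁ x i := by
  rw [digitProd_eq_pow_mul_pow]
  exact one_le_mul_of_one_le_of_one_le (one_le_pow₀ h₀) (one_le_pow₀ h₁)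

theorem digitProd_le_max_pow (h₀ : 0 ≤ a₀) (h₁ : 0 ≤ a₁) (x : ℝ) (i : ℕ) :
    digitProd a₀ a₁ x i ≤ max a₀ a₁ ^ i := by
  rw [digitProd_eq_pow_mul_pow, ← pow_mul_pow_sub (max a₀ a₁) (zeroCount_le x i)]
  gcongr
  exacts [le_max_left _ _, le_max_right _ _]

theorem exists_lt_one_digitProd_le_pow {p q x : ℝ} (hp : 0 < p) (hpq : p < q)
    (hdens : Real.log q / Real.log (q / p) <
      liminf (fun i : ℕ => (zeroCount x i : ℝ) / i) atTop) :
    ∃ r, 0 < r ∧ r < 1 ∧ ∀ᶠ i in atTop, digitProd p q x i ≤ r ^ i := by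
  have hq : 0 < q := hp.trans hpq
  have hlog : 0 < Real.log (q / p) := Real.log_pos ((one_lt_div hp).2 hpq)
  obtain ⟨c, hc, hc'⟩ := exists_between hdens
  have hfreq : ∀ᶠ i : ℕ in atTop, c < (zeroCount x i : ℝ) / i :=
    eventually_lt_of_lt_liminf hc' (isBoundedUnder_of ⟨0, fun i => by positivity⟩)
  refine ⟨Real.exp (Real.log q - c * Real.log (q / p)), Real.exp_pos _, ?_, ?_⟩
  · rw [div_lt_iff₀ hlog] at hc
    exact Real.exp_lt_one_iff.2 (by linarith)
  filter_upwards [hfreq, eventually_gt_atTop 0] with i hi hi0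
  rw [lt_div_iff₀ (by exact_mod_cast hi0)] at hi
  have hlogprod : Real.log (digitProd p q x i) =
      i * Real.log q - zeroCount x i * Real.log (q / p) := by
    rw [digitProd_eq_pow_mul_pow, Real.log_mul (by positivity) (by positivity), Real.log_pow,
      Real.log_pow, Nat.cast_sub (zeroCount_le x i), Real.log_div hq.ne' hp.ne']
    ring
  have hpos : 0 < digitProd p q x i := by
    rw [digitProd_eq_pow_mul_pow]
    positivity
  rw [← Real.exp_nat_mul, ← Real.log_le_iff_le_exp hpos, hlogprod]
  nlinarith [mul_le_mul_of_nonneg_right hi.le hlog.le]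

end DigitProd

theorem tendsto_pow_mul_one_add_mul_nhds_zero {r : ℝ} (hr : 0 ≤ r) (hr1 : r < 1) (C : ℝ) :
    Tendsto (fun i : ℕ => r ^ i * (1 + C * i)) atTop (𝓝 0) := by
  have hlim := (tendsto_pow_atTop_nhds_zero_of_lt_one hr hr1).add
    ((tendsto_self_mul_const_pow_of_lt_one hr hr1).const_mul C)
  rw [mul_zero, add_zero] at hlim
  exact hlim.congr fun i => by ring

theorem two_pow_add_floor_succ {x : ℝ} (hx : 0 ≤ x) (i : ℕ) :
    2 ^ (i + 1) + ⌊(2 : ℝ) ^ (i + 1) * x⌋₊ =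
      2 * (2 ^ i + ⌊(2 : ℝ) ^ i * x⌋₊) +
        if ⌊(2 : ℝ) ^ (i + 1) * x⌋ % 2 = 0 then 0 else 1 := by
  have hhalf : ⌊(2 : ℝ) ^ i * x⌋₊ = ⌊(2 : ℝ) ^ (i + 1) * x⌋₊ / 2 := by
    rw [← Nat.floor_div_ofNat]
    congr 1
    ring
  have hcast : (⌊(2 : ℝ) ^ (i + 1) * x⌋₊ : ℤ) = ⌊(2 : ℝ) ^ (i + 1) * x⌋ :=
    Int.natCast_floor_eq_floor (by positivity)
  rw [hhalf, ← hcast, pow_succ]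
  split_ifs <;> omega

/-- `f` is an affine 2-regular sequence: `f (2n) = A₀ f n + b₀` and `f (2n+1) = A₁ f n + b₁` for
all `n ≥ 1`. -/
structure IsAffineTwoRegular (A₀ A₁ b₀ b₁ : ℕ) (f : ℕ → ℕ) : Prop where
  even : ∀ n, 1 ≤ n → f (2 * n) = A₀ * f n + b₀
  odd : ∀ n, 1 ≤ n → f (2 * n + 1) = A₁ * f n + b₁

namespace IsAffineTwoRegular

variable {A₀ A₁ b₀ b₁ : ℕ} {f : ℕ → ℕ}

/-- The affine function of `f n` that is multiplied by exactly `A₀ + A₁` when summed over the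
children of `n`; it is, up to normalisation, the ghost measure of the dyadic interval that the
node `n` represents. -/
def weight (_ : IsAffineTwoRegular A₀ A₁ b₀ b₁ f) (n : ℕ) : ℝ :=
  (A₀ + A₁ - 2) * f n + (b₀ + b₁)

variable (h : IsAffineTwoRegular A₀ A₁ b₀ b₁ f)
include h

theorem weight_children_add {n : ℕ} (hn : 1 ≤ n) :
    h.weight (2 * n) + h.weight (2 * n + 1) = (A₀ + A₁) * h.weight n := by
  simp only [weight, h.even n hn, h.odd n hn]
  push_cast
  ring

theorem weight_two_mul_le (hA₀ : 1 ≤ A₀) (hA₁ : 1 ≤ A₁) {n : ℕ} (hn : 1 ≤ n) :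
    h.weight (2 * n) ≤ A₀ * h.weight n + (A₀ + A₁ - 2) * (b₀ + b₁) := by
  have hA₀' : (0 : ℝ) ≤ A₀ - 1 := sub_nonneg.2 (by exact_mod_cast hA₀)
  have hA₁' : (0 : ℝ) ≤ A₁ - 1 := sub_nonneg.2 (by exact_mod_cast hA₁)
  have herror : (0 : ℝ) ≤ (A₀ - 1) * b₀ + (2 * (A₀ - 1) + (A₁ - 1)) * b₁ := by positivity
  rw [weight, weight, h.even n hn]
  push_cast
  linear_combination herror

theorem weight_two_mul_add_one_le (hA₀ : 1 ≤ A₀) (hA₁ : 1 ≤ A₁) {n : ℕ} (hn : 1 ≤ n) :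
    h.weight (2 * n + 1) ≤ A₁ * h.weight n + (A₀ + A₁ - 2) * (b₀ + b₁) := by
  have hA₀' : (0 : ℝ) ≤ A₀ - 1 := sub_nonneg.2 (by exact_mod_cast hA₀)
  have hA₁' : (0 : ℝ) ≤ A₁ - 1 := sub_nonneg.2 (by exact_mod_cast hA₁)
  have herror : (0 : ℝ) ≤ (A₁ - 1) * b₁ + (2 * (A₁ - 1) + (A₀ - 1)) * b₀ := by positivity
  rw [weight, weight, h.odd n hn]
  push_cast
  linear_combination herror

theorem mul_blockSum_add_eq_pow_mul_weight {m : ℕ} (hm : 1 ≤ m) (k : ℕ) :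
    ((A₀ : ℝ) + A₁ - 2) * blockSum f m k + 2 ^ k * (b₀ + b₁) = (A₀ + A₁) ^ k * h.weight m := by
  induction k generalizing m with
  | zero => simp [weight]
  | succ k ih =>
    have hleft := ih (m := 2 * m) (by omega)
    have hright := ih (m := 2 * m + 1) (by omega)
    rw [pow_succ ((A₀ : ℝ) + A₁), mul_assoc, ← h.weight_children_add hm, blockSum_succ]
    push_cast
    linear_combination hleft + hright

theorem pow_mul_le_blockSum {m : ℕ} (hm : 1 ≤ m) (k : ℕ) :
    (A₀ + A₁) ^ k * f m ≤ blockSum f m k := by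
  induction k generalizing m with
  | zero => simp
  | succ k ih =>
    calc
      (A₀ + A₁) ^ (k + 1) * f m ≤ (A₀ + A₁) ^ k * (f (2 * m) + f (2 * m + 1)) := by
        rw [pow_succ, mul_assoc, h.even m hm, h.odd m hm]
        exact Nat.mul_le_mul_left _ (by linarith)
      _ ≤ blockSum f m (k + 1) := by
        rw [mul_add, blockSum_succ]
        exact add_le_add (ih (by omega)) (ih (by omega))

theorem weight_pos {n : ℕ} (hn : 1 ≤ f n) (hA : 3 ≤ A₀ + A₁) : 0 < h.weight n := by
  have hA' : (3 : ℝ) ≤ A₀ + A₁ := by exact_mod_cast hA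
  have hn' : (1 : ℝ) ≤ f n := by exact_mod_cast hn
  have : (0 : ℝ) < (A₀ + A₁ - 2) * f n := mul_pos (by linarith) (by linarith)
  rw [weight]
  positivity

theorem tendsto_blockSum_div_pow (hA : 3 ≤ A₀ + A₁) {m : ℕ} (hm : 1 ≤ m) :
    Tendsto (fun k => (blockSum f m k : ℝ) / (A₀ + A₁) ^ k) atTop
      (𝓝 (h.weight m / (A₀ + A₁ - 2))) := by
  have hA' : (3 : ℝ) ≤ A₀ + A₁ := by exact_mod_cast hA
  have hne : (A₀ : ℝ) + A₁ - 2 ≠ 0 := by linarith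
  have hexact : ∀ k, (blockSum f m k : ℝ) / (A₀ + A₁) ^ k =
      (h.weight m - (b₀ + b₁) * (2 / ((A₀ : ℝ) + A₁)) ^ k) / (A₀ + A₁ - 2) := by
    intro k
    have hk := h.mul_blockSum_add_eq_pow_mul_weight hm k
    rw [div_pow]
    field_simp
    linear_combination hk
  have hgeom : Tendsto (fun k => (2 / ((A₀ : ℝ) + A₁)) ^ k) atTop (𝓝 0) :=
    tendsto_pow_atTop_nhds_zero_of_lt_one (by positivity)
      ((div_lt_one (by linarith)).2 (by linarith))
  simp only [hexact]
  simpa using ((hgeom.const_mul ((b₀ : ℝ) + b₁)).const_sub (h.weight m)).div_const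
    ((A₀ : ℝ) + A₁ - 2)

theorem isProbabilityMeasure_ghostApprox (hf1 : 1 ≤ f 1) (hA : 0 < A₀ + A₁) (N : ℕ) :
    IsProbabilityMeasure (ghostApprox f N) :=
  isProbabilityMeasure_ghostApprox_of_pos f <|
    lt_of_lt_of_le (by positivity) (h.pow_mul_le_blockSum le_rfl N)

theorem tendsto_ghostApprox_dyadicIco (hf1 : 1 ≤ f 1) (hA : 3 ≤ A₀ + A₁) {i m : ℕ}
    (hm : m < 2 ^ i) :
    Tendsto (fun N => (ghostApprox f N).real (dyadicIco i m)) atTop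
      (𝓝 (h.weight (2 ^ i + m) / ((A₀ + A₁) ^ i * h.weight 1))) := by
  have hA' : (3 : ℝ) ≤ A₀ + A₁ := by exact_mod_cast hA
  have hne : (A₀ : ℝ) + A₁ - 2 ≠ 0 := by linarith
  have hw := (h.weight_pos hf1 hA).ne'
  have hcell := h.tendsto_blockSum_div_pow hA (m := 2 ^ i + m) (by have := Nat.two_pow_pos i; omega)
  have htotal := (tendsto_add_atTop_iff_nat i).2 (h.tendsto_blockSum_div_pow hA le_rfl)
  have hratio := (hcell.div htotal (div_ne_zero hw hne)).div_const (((A₀ : ℝ) + A₁) ^ i)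
  rw [← tendsto_add_atTop_iff_nat i]
  simp only [measureReal_ghostApprox_dyadicIco f hm]
  convert hratio using 2 with k
  · rw [Pi.div_apply, pow_add]
    field_simp
  · field_simp

theorem weight_two_pow_add_floor_le (hA₀ : 1 ≤ A₀) (hA₁ : 1 ≤ A₁) {x : ℝ}
    (hx : x ∈ Set.Ico (0 : ℝ) 1) (i : ℕ) :
    h.weight (2 ^ i + ⌊(2 : ℝ) ^ i * x⌋₊) ≤
      digitProd A₀ A₁ x i * (h.weight 1 + (A₀ + A₁ - 2) * (b₀ + b₁) * i) := by
  have hA₀' : (1 : ℝ) ≤ A₀ := by exact_mod_cast hA₀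
  have hA₁' : (1 : ℝ) ≤ A₁ := by exact_mod_cast hA₁
  set e : ℝ := (A₀ + A₁ - 2) * (b₀ + b₁)
  have he : 0 ≤ e := mul_nonneg (by linarith) (by positivity)
  induction i with
  | zero => simp [digitProd, Nat.floor_eq_zero.2 hx.2]
  | succ i ih =>
    set n := 2 ^ i + ⌊(2 : ℝ) ^ i * x⌋₊
    have hn : 1 ≤ n := by have := Nat.two_pow_pos i; omega
    set d : ℝ := if ⌊(2 : ℝ) ^ (i + 1) * x⌋ % 2 = 0 then (A₀ : ℝ) else A₁ with hd
    have hd0 : 0 ≤ d := by rw [hd]; split_ifs <;> exact Nat.cast_nonneg _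
    have hstep : h.weight (2 ^ (i + 1) + ⌊(2 : ℝ) ^ (i + 1) * x⌋₊) ≤ d * h.weight n + e := by
      rw [two_pow_add_floor_succ hx.1, hd]
      split_ifs
      exacts [h.weight_two_mul_le hA₀ hA₁ hn, h.weight_two_mul_add_one_le hA₀ hA₁ hn]
    have hprod : 1 ≤ digitProd A₀ A₁ x (i + 1) := one_le_digitProd hA₀' hA₁' x (i + 1)
    calc
      _ ≤ d * h.weight n + e := hstep
      _ ≤ d * (digitProd A₀ A₁ x i * (h.weight 1 + e * i)) + digitProd A₀ A₁ x (i + 1) * e :=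
        add_le_add (mul_le_mul_of_nonneg_left ih hd0) (le_mul_of_one_le_left he hprod)
      _ = digitProd A₀ A₁ x (i + 1) * (h.weight 1 + e * (i + 1 : ℕ)) := by
        rw [digitProd_succ, ← hd]
        push_cast
        ring

theorem exists_weight_div_le (hf1 : 1 ≤ f 1) (hA₀ : 1 ≤ A₀) (hA₁ : 1 ≤ A₁) (hA : 3 ≤ A₀ + A₁) :
    ∃ C : ℝ, 0 ≤ C ∧ ∀ x ∈ Set.Ico (0 : ℝ) 1, ∀ i : ℕ,
      h.weight (2 ^ i + ⌊(2 : ℝ) ^ i * x⌋₊) / ((A₀ + A₁) ^ i * h.weight 1) ≤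
        digitProd (A₀ / (A₀ + A₁)) (A₁ / (A₀ + A₁)) x i * (1 + C * i) := by
  have hA' : (3 : ℝ) ≤ A₀ + A₁ := by exact_mod_cast hA
  have hw := h.weight_pos hf1 hA
  have he : (0 : ℝ) ≤ (A₀ + A₁ - 2) * (b₀ + b₁) := mul_nonneg (by linarith) (by positivity)
  refine ⟨(A₀ + A₁ - 2) * (b₀ + b₁) / h.weight 1, by positivity, fun x hx i => ?_⟩
  calc
    _ ≤ digitProd A₀ A₁ x i * (h.weight 1 + (A₀ + A₁ - 2) * (b₀ + b₁) * i) /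
        ((A₀ + A₁) ^ i * h.weight 1) := by
      gcongr
      exact h.weight_two_pow_add_floor_le hA₀ hA₁ hx i
    _ = ((A₀ + A₁ : ℝ)⁻¹ ^ i * digitProd A₀ A₁ x i) *
        (1 + (A₀ + A₁ - 2) * (b₀ + b₁) / h.weight 1 * i) := by
      rw [inv_pow]
      field_simp
    _ = _ := by rw [pow_mul_digitProd, inv_mul_eq_div, inv_mul_eq_div]

section GhostMeasure

variable {μ : Measure ℝ} [IsProbabilityMeasure μ]

theorem nullSingletonClass_of_weakLimit (hf1 : 1 ≤ f 1) (hA₀ : 1 ≤ A₀) (hA₁ : 1 ≤ A₁)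
    (hA : 3 ≤ A₀ + A₁) (hμ : WeakLimit (ghostApprox f) μ) : NullSingletonClass μ := by
  have := h.isProbabilityMeasure_ghostApprox hf1 (by omega)
  obtain ⟨C, hC0, hC⟩ := h.exists_weight_div_le hf1 hA₀ hA₁ hA
  set a₀ : ℝ := A₀ / (A₀ + A₁)
  set a₁ : ℝ := A₁ / (A₀ + A₁)
  have hmax : max a₀ a₁ < 1 :=
    max_lt ((div_lt_one (by positivity)).2 (by norm_cast; omega))
      ((div_lt_one (by positivity)).2 (by norm_cast; omega))
  refine hμ.nullSingletonClass_of_dyadicIco_le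
    (tendsto_pow_mul_one_add_mul_nhds_zero (le_max_of_le_left (by positivity)) hmax C) fun i m => ?_
  by_cases hm : m < 0 ∨ 2 ^ i ≤ m
  · refine ⟨0, by positivity, ?_⟩
    simp only [measureReal_ghostApprox_eq_zero_of_disjoint f _ (disjoint_dyadicIco_Ico_zero_one hm),
      tendsto_const_nhds]
  push Not at hm
  lift m to ℕ using hm.1
  have hlt : m < 2 ^ i := by exact_mod_cast hm.2
  refine ⟨_, ?_, h.tendsto_ghostApprox_dyadicIco hf1 hA hlt⟩
  have hx : (m : ℝ) / 2 ^ i ∈ Set.Ico (0 : ℝ) 1 :=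
    ⟨by positivity, (div_lt_one (by positivity)).2 (by exact_mod_cast hlt)⟩
  have hbound := hC _ hx i
  rw [mul_div_cancel₀ (m : ℝ) (by positivity), Nat.floor_natCast] at hbound
  refine hbound.trans ?_
  gcongr
  exact digitProd_le_max_pow (by positivity) (by positivity) _ i

theorem measureReal_dyadicIco (hf1 : 1 ≤ f 1) (hA₀ : 1 ≤ A₀) (hA₁ : 1 ≤ A₁) (hA : 3 ≤ A₀ + A₁)
    (hμ : WeakLimit (ghostApprox f) μ) {i m : ℕ} (hm : m < 2 ^ i) :
    μ.real (dyadicIco i m) = h.weight (2 ^ i + m) / ((A₀ + A₁) ^ i * h.weight 1) := by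
  have := h.isProbabilityMeasure_ghostApprox hf1 (by omega)
  have := h.nullSingletonClass_of_weakLimit hf1 hA₀ hA₁ hA hμ
  exact tendsto_nhds_unique (hμ.tendsto_measureReal_dyadicIco i m)
    (h.tendsto_ghostApprox_dyadicIco hf1 hA hm)

theorem exists_two_pow_mul_measureReal_dyadicIco_le (hf1 : 1 ≤ f 1) (hA₀ : 1 ≤ A₀) (hA₁ : 1 ≤ A₁)
    (hA : 3 ≤ A₀ + A₁) (hμ : WeakLimit (ghostApprox f) μ) :
    ∃ C : ℝ, 0 ≤ C ∧ ∀ x ∈ Set.Ico (0 : ℝ) 1, ∀ i : ℕ,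
      2 ^ i * μ.real (dyadicIco i ⌊(2 : ℝ) ^ i * x⌋) ≤
        digitProd (2 * A₀ / (A₀ + A₁)) (2 * A₁ / (A₀ + A₁)) x i * (1 + C * i) := by
  obtain ⟨C, hC0, hC⟩ := h.exists_weight_div_le hf1 hA₀ hA₁ hA
  refine ⟨C, hC0, fun x hx i => ?_⟩
  have hfloor : ⌊(2 : ℝ) ^ i * x⌋₊ < 2 ^ i := by
    rw [Nat.floor_lt' (by positivity)]
    push_cast
    exact mul_lt_of_lt_one_right (by positivity) hx.2
  rw [← Int.natCast_floor_eq_floor (mul_nonneg (by positivity) hx.1),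
    h.measureReal_dyadicIco hf1 hA₀ hA₁ hA hμ hfloor, mul_div_assoc, mul_div_assoc,
    ← pow_mul_digitProd, mul_assoc]
  gcongr
  exact hC x hx i

end GhostMeasure

end IsAffineTwoRegular

theorem stmt_11 (A₀ A₁ b₀ b₁ : ℕ) (hnz : ¬(A₀ = 0 ∧ A₁ = 0 ∧ b₀ = 0 ∧ b₁ = 0))
    (f : ℕ → ℕ) (hf1 : 1 ≤ f 1)
    (heven : ∀ n, 1 ≤ n → f (2 * n) = A₀ * f n + b₀)
    (hodd : ∀ n, 1 ≤ n → f (2 * n + 1) = A₁ * f n + b₁)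
    (hA0 : 1 ≤ A₀) (hlt : A₀ < A₁) (hA : 3 ≤ A₀ + A₁)
    (μ : Measure ℝ) (hμ : IsProbabilityMeasure μ)
    (hlim : WeakLimit (ghostApprox f) μ)
    (x : ℝ) (hx : x ∈ Set.Ico (0:ℝ) 1)
    (hdens : Real.log (2 * (A₁ : ℝ) / ((A₀ : ℝ) + A₁)) / Real.log ((A₁ : ℝ) / A₀) <
      Filter.liminf (fun i : ℕ =>
        ((((Finset.Icc 1 i).filter fun j => ⌊(2:ℝ) ^ j * x⌋ % 2 = 0).card : ℝ) / i)) atTop) :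
    Tendsto (fun i : ℕ => (2 : ℝ) ^ i *
        (μ (Set.Ico ((⌊(2:ℝ) ^ i * x⌋ : ℝ) / 2 ^ i) (((⌊(2:ℝ) ^ i * x⌋ : ℝ) + 1) / 2 ^ i))).toReal)
      atTop (𝓝 0) := by
  have h : IsAffineTwoRegular A₀ A₁ b₀ b₁ f := ⟨heven, hodd⟩
  have hlt' : (A₀ : ℝ) < A₁ := by exact_mod_cast hlt
  obtain ⟨C, hC0, hC⟩ :=
    h.exists_two_pow_mul_measureReal_dyadicIco_le hf1 hA0 (hA0.trans hlt.le) hA hlim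
  set p : ℝ := 2 * A₀ / (A₀ + A₁) with hp
  set q : ℝ := 2 * A₁ / (A₀ + A₁) with hq
  have hqp : (A₁ : ℝ) / A₀ = q / p := by
    rw [hp, hq]
    field_simp
  rw [hqp] at hdens
  obtain ⟨r, hr0, hr1, hr⟩ :=
    exists_lt_one_digitProd_le_pow (by positivity : 0 < p) (by rw [hp, hq]; gcongr) hdens
  refine squeeze_zero' (.of_forall fun i => by positivity) ?_
    (tendsto_pow_mul_one_add_mul_nhds_zero hr0.le hr1 C)
  filter_upwards [hr] with i hi
  calc
    _ ≤ digitProd p q x i * (1 + C * i) := hC x hx i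
    _ ≤ r ^ i * (1 + C * i) := by gcongr
end
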